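/- Assume C = 0, A ≠ 0, D ≠ 0 and B² + D² > 0. Then in the backward Riccati recursion context: q = AD(ĀD − ρBC̄)/(B² + D²) and r = A²D²/(B² + D²); consequently, for 0 ≤ t ≤ T, (P_t)₁₁ = (A²D²/(B² + D²))^{T−t}, (P_t)₁₂ = (P_t)₂₁ = −A^{T−t} (D(ĀD − ρBC̄)/(B² + D²))^{T−t}, and (P_t)₂₂ = (Ā² + C̄²)^{T−t} − Σ_{j=t}^{T−1} ((ĀD − ρBC̄)²/(B² + D²))^{T−j−1} · ((ĀB + ρC̄D)²/(B² + D²)) · (Ā² + C̄²)^{j−t}; and for 0 ≤ t ≤ T−1, G_t = (B² + D²)(A²D²/(B² + D²))^{T−t−1} and (1/G_t) H_t = (AB/(B² + D²), −((ĀD − ρBC̄)/(AD))^{T−t−1} (ĀB + ρC̄D)/(B² + D²)). -/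

import Mathlib

open Matrix

/-!
A step `M ↦ F - G⁻¹ H Hᵀ` scales the upper-left entry of `M` by `r = α - h ^ 2 / s`. Once that
entry is known to be nonzero it cancels in `G⁻¹ H Hᵀ`, so the off-diagonal entry is scaled by
`q = β - k * h / s`. The lower-right entry then obeys a scalar affine recursion whose
inhomogeneous term is geometric of ratio `q ^ 2 / r`, and it is solved by variation of constants.
-/

section BackwardRecurrence

variable {R : Type*} [Semiring R] {T t : ℕ} {c : R} {x f : ℕ → R}

theorem eq_pow_mul_add_sum_Ico_of_backward (h : ∀ t < T, x t = c * x (t + 1) + f t)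
    (ht : t ≤ T) :
    x t = c ^ (T - t) * x T + ∑ j ∈ Finset.Ico t T, c ^ (j - t) * f j := by
  induction ht using Nat.decreasingInduction with
  | self => simp
  | of_succ t ht ih =>
    have shifted_sum : c * ∑ j ∈ Finset.Ico (t + 1) T, c ^ (j - (t + 1)) * f j =
        ∑ j ∈ Finset.Ico (t + 1) T, c ^ (j - t) * f j := by
      rw [Finset.mul_sum]
      refine Finset.sum_congr rfl fun j hj => ?_
      have hj : j - t = j - (t + 1) + 1 := by grind
      rw [hj, pow_succ', mul_assoc]
    have hT : T - t = T - (t + 1) + 1 := by lia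
    rw [h t ht, ih, mul_add, shifted_sum, ← mul_assoc, ← pow_succ', ← hT,
      Finset.sum_eq_sum_Ico_succ_bot ht, Nat.sub_self, pow_zero, one_mul, add_assoc,
      add_comm (f t)]

theorem eq_pow_mul_of_backward (h : ∀ t < T, x t = c * x (t + 1)) (ht : t ≤ T) :
    x t = c ^ (T - t) * x T := by
  simpa using eq_pow_mul_add_sum_Ico_of_backward (x := x) (f := 0) (by simpa using h) ht

end BackwardRecurrence

section Riccati

variable {F : Type*} [Field F]

/-- The vector `H` of a Riccati step from `M`, pairing the control with the two states. -/
def riccatiCross (h k : F) (M : Matrix (Fin 2) (Fin 2) F) : Fin 2 → F :=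
  ![h * M 0 0, k * M 1 0]

/-- One backward step `F - G⁻¹ H Hᵀ` of a two-dimensional Riccati recursion: `F` scales the entries
of `M` by `α`, `β`, `γ`, and `G = s * M 0 0` because the control acts on the first state only. -/
def riccatiStep (α β γ h k s : F) (M : Matrix (Fin 2) (Fin 2) F) : Matrix (Fin 2) (Fin 2) F :=
  !![α * M 0 0, β * M 0 1; β * M 0 1, γ * M 1 1] -
    (1 / (s * M 0 0)) • vecMulVec (riccatiCross h k M) (riccatiCross h k M)

variable {α β γ h k s : F} {M : Matrix (Fin 2) (Fin 2) F}

theorem riccatiStep_isSymm : (riccatiStep α β γ h k s M).IsSymm := by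
  refine IsSymm.ext fun i j => ?_
  fin_cases i <;> fin_cases j <;> simp [riccatiStep, vecMulVec_apply, mul_comm]

theorem riccatiStep_apply_zero_zero :
    riccatiStep α β γ h k s M 0 0 = (α - h ^ 2 / s) * M 0 0 := by
  simp only [riccatiStep, riccatiCross, Matrix.sub_apply, Matrix.smul_apply, vecMulVec_apply,
    smul_eq_mul, of_apply, cons_val_zero]
  field

theorem riccatiStep_apply_zero_one (hM : M.IsSymm) (hM₀ : M 0 0 ≠ 0) :
    riccatiStep α β γ h k s M 0 1 = (β - k * h / s) * M 0 1 := by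
  simp only [riccatiStep, riccatiCross, Matrix.sub_apply, Matrix.smul_apply, vecMulVec_apply,
    smul_eq_mul, of_apply, cons_val_zero, cons_val_one, cons_val_fin_one, hM.apply 0 1]
  field

theorem riccatiStep_apply_one_one (hM : M.IsSymm) :
    riccatiStep α β γ h k s M 1 1 = γ * M 1 1 - k ^ 2 / s * (M 0 1 ^ 2 / M 0 0) := by
  simp only [riccatiStep, riccatiCross, Matrix.sub_apply, Matrix.smul_apply, vecMulVec_apply,
    smul_eq_mul, of_apply, cons_val_one, cons_val_fin_one, hM.apply 0 1]
  field

theorem one_div_smul_riccatiCross (hM₀ : M 0 0 ≠ 0) :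
    (1 / (s * M 0 0)) • riccatiCross h k M = ![h / s, k / s * (M 1 0 / M 0 0)] := by
  have first : 1 / (s * M 0 0) * (h * M 0 0) = h / s := by field
  have second : 1 / (s * M 0 0) * (k * M 1 0) = k / s * (M 1 0 / M 0 0) := by field
  simp only [riccatiCross, smul_cons, smul_eq_mul, smul_empty, first, second]

/-- `P` solves the Riccati recursion backward from the horizon `T`; its values after `T` are
unconstrained, and `P T` is the terminal condition. -/
def IsBackwardRiccati (α β γ h k s : F) (T : ℕ) (P : ℕ → Matrix (Fin 2) (Fin 2) F) : Prop :=
  ∀ t < T, P t = riccatiStep α β γ h k s (P (t + 1))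

namespace IsBackwardRiccati

variable {T t : ℕ} {P : ℕ → Matrix (Fin 2) (Fin 2) F}

theorem isSymm (hP : IsBackwardRiccati α β γ h k s T P) (hT : (P T).IsSymm) (ht : t ≤ T) :
    (P t).IsSymm := by
  rcases ht.eq_or_lt with rfl | ht
  · exact hT
  · exact hP t ht ▸ riccatiStep_isSymm

theorem apply_zero_zero (hP : IsBackwardRiccati α β γ h k s T P) (ht : t ≤ T) :
    P t 0 0 = (α - h ^ 2 / s) ^ (T - t) * P T 0 0 :=
  eq_pow_mul_of_backward (x := fun t => P t 0 0)
    (fun t ht => by rw [hP t ht, riccatiStep_apply_zero_zero]) ht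

theorem apply_zero_zero_ne_zero (hP : IsBackwardRiccati α β γ h k s T P) (hr : α - h ^ 2 / s ≠ 0)
    (hT₀ : P T 0 0 ≠ 0) (ht : t ≤ T) : P t 0 0 ≠ 0 := by
  rw [hP.apply_zero_zero ht]
  exact mul_ne_zero (pow_ne_zero _ hr) hT₀

theorem apply_zero_one (hP : IsBackwardRiccati α β γ h k s T P) (hr : α - h ^ 2 / s ≠ 0)
    (hT : (P T).IsSymm) (hT₀ : P T 0 0 ≠ 0) (ht : t ≤ T) :
    P t 0 1 = (β - k * h / s) ^ (T - t) * P T 0 1 :=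
  eq_pow_mul_of_backward (x := fun t => P t 0 1)
    (fun t ht => by
      rw [hP t ht, riccatiStep_apply_zero_one (hP.isSymm hT ht)
        (hP.apply_zero_zero_ne_zero hr hT₀ ht)]) ht

theorem apply_one_one (hP : IsBackwardRiccati α β γ h k s T P) (hr : α - h ^ 2 / s ≠ 0)
    (hT : (P T).IsSymm) (hT₀ : P T 0 0 ≠ 0) (ht : t ≤ T) :
    P t 1 1 = γ ^ (T - t) * P T 1 1 - ∑ j ∈ Finset.Ico t T,
      ((β - k * h / s) ^ 2 / (α - h ^ 2 / s)) ^ (T - j - 1) * (k ^ 2 / s) * γ ^ (j - t) *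
        (P T 0 1 ^ 2 / P T 0 0) := by
  have affine : ∀ t < T, P t 1 1 =
      γ * P (t + 1) 1 1 + -(k ^ 2 / s * (P (t + 1) 0 1 ^ 2 / P (t + 1) 0 0)) := fun t ht => by
    rw [hP t ht, riccatiStep_apply_one_one (hP.isSymm hT ht), sub_eq_add_neg]
  rw [eq_pow_mul_add_sum_Ico_of_backward (x := fun t => P t 1 1) affine ht, sub_eq_add_neg,
    ← Finset.sum_neg_distrib]
  refine congrArg _ (Finset.sum_congr rfl fun j hj => ?_)
  have hj : j + 1 ≤ T := (Finset.mem_Ico.mp hj).2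
  rw [hP.apply_zero_one hr hT hT₀ hj, hP.apply_zero_zero hj, Nat.sub_sub]
  generalize β - k * h / s = q, α - h ^ 2 / s = r
  ring

theorem gain_eq (hP : IsBackwardRiccati α β γ h k s T P) (hr : α - h ^ 2 / s ≠ 0)
    (hT : (P T).IsSymm) (hT₀ : P T 0 0 ≠ 0) (ht : t ≤ T) :
    (1 / (s * P t 0 0)) • riccatiCross h k (P t) =
      ![h / s, k / s *
        (((β - k * h / s) / (α - h ^ 2 / s)) ^ (T - t) * (P T 0 1 / P T 0 0))] := by
  rw [one_div_smul_riccatiCross (hP.apply_zero_zero_ne_zero hr hT₀ ht), (hP.isSymm hT ht).apply 0 1,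
    hP.apply_zero_one hr hT hT₀ ht, hP.apply_zero_zero ht, mul_div_mul_comm, ← div_pow]

end IsBackwardRiccati

end Riccati

section AssetLiability

variable {F : Type*} [Field F] {A B D : F}

theorem asset_coeff_eq (hBD : B ^ 2 + D ^ 2 ≠ 0) :
    A ^ 2 - (A * B) ^ 2 / (B ^ 2 + D ^ 2) = A ^ 2 * D ^ 2 / (B ^ 2 + D ^ 2) := by
  field

theorem cross_coeff_eq (Abar Cbar ρ : F) (hBD : B ^ 2 + D ^ 2 ≠ 0) :
    A * Abar - (Abar * B + ρ * Cbar * D) * (A * B) / (B ^ 2 + D ^ 2) =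
      A * D * (Abar * D - ρ * B * Cbar) / (B ^ 2 + D ^ 2) := by
  field

theorem cross_coeff_sq_div_asset_coeff {S : F} (m : F) (hA : A ≠ 0) (hD : D ≠ 0) :
    (A * D * m / S) ^ 2 / (A ^ 2 * D ^ 2 / S) = m ^ 2 / S := by
  field

theorem cross_coeff_div_asset_coeff {S : F} (m : F) (hA : A ≠ 0) (hD : D ≠ 0) (hS : S ≠ 0) :
    A * D * m / S / (A ^ 2 * D ^ 2 / S) = m / (A * D) := by
  field

end AssetLiability

theorem stmt_16_general {F : Type*} [Field F] (T : ℕ) (A B D Abar Cbar ρ r q : F)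
    (hA : A ≠ 0) (hD : D ≠ 0) (hBD : B ^ 2 + D ^ 2 ≠ 0)
    (hr : r = A ^ 2 - (A * B) ^ 2 / (B ^ 2 + D ^ 2))
    (hq : q = A * Abar - (Abar * B + ρ * Cbar * D) * (A * B) / (B ^ 2 + D ^ 2))
    (P : ℕ → Matrix (Fin 2) (Fin 2) F)
    (hPT : P T = !![1, -1; -1, 1])
    (hrec : ∀ t, t < T →
      P t = !![A ^ 2 * P (t + 1) 0 0, A * Abar * P (t + 1) 0 1;
               A * Abar * P (t + 1) 0 1, (Abar ^ 2 + Cbar ^ 2) * P (t + 1) 1 1]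
            - (1 / ((B ^ 2 + D ^ 2) * P (t + 1) 0 0)) •
                vecMulVec
                  ![A * B * P (t + 1) 0 0, (Abar * B + ρ * Cbar * D) * P (t + 1) 1 0]
                  ![A * B * P (t + 1) 0 0, (Abar * B + ρ * Cbar * D) * P (t + 1) 1 0]) :
    q = A * D * (Abar * D - ρ * B * Cbar) / (B ^ 2 + D ^ 2)
    ∧ r = A ^ 2 * D ^ 2 / (B ^ 2 + D ^ 2)
    ∧ (∀ t, t ≤ T →
        P t 0 0 = (A ^ 2 * D ^ 2 / (B ^ 2 + D ^ 2)) ^ (T - t)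
        ∧ P t 0 1 = -A ^ (T - t)
            * (D * (Abar * D - ρ * B * Cbar) / (B ^ 2 + D ^ 2)) ^ (T - t)
        ∧ P t 1 0 = -A ^ (T - t)
            * (D * (Abar * D - ρ * B * Cbar) / (B ^ 2 + D ^ 2)) ^ (T - t)
        ∧ P t 1 1 = (Abar ^ 2 + Cbar ^ 2) ^ (T - t)
            - ∑ j ∈ Finset.Ico t T,
                ((Abar * D - ρ * B * Cbar) ^ 2 / (B ^ 2 + D ^ 2)) ^ (T - j - 1)
                  * ((Abar * B + ρ * Cbar * D) ^ 2 / (B ^ 2 + D ^ 2))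
                  * (Abar ^ 2 + Cbar ^ 2) ^ (j - t))
    ∧ (∀ t, t < T →
        (B ^ 2 + D ^ 2) * P (t + 1) 0 0
            = (B ^ 2 + D ^ 2) * (A ^ 2 * D ^ 2 / (B ^ 2 + D ^ 2)) ^ (T - t - 1)
        ∧ (1 / ((B ^ 2 + D ^ 2) * P (t + 1) 0 0)) •
              ![A * B * P (t + 1) 0 0, (Abar * B + ρ * Cbar * D) * P (t + 1) 1 0]
            = ![A * B / (B ^ 2 + D ^ 2),
                -((Abar * D - ρ * B * Cbar) / (A * D)) ^ (T - t - 1)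
                  * (Abar * B + ρ * Cbar * D) / (B ^ 2 + D ^ 2)]) := by
  have hr' := asset_coeff_eq (A := A) hBD
  have hq' := cross_coeff_eq (A := A) Abar Cbar ρ hBD
  have hr₀ : A ^ 2 - (A * B) ^ 2 / (B ^ 2 + D ^ 2) ≠ 0 := by simp [hr', hA, hD, hBD]
  have hP : IsBackwardRiccati (A ^ 2) (A * Abar) (Abar ^ 2 + Cbar ^ 2) (A * B)
      (Abar * B + ρ * Cbar * D) (B ^ 2 + D ^ 2) T P := hrec
  have hT : (P T).IsSymm := IsSymm.ext (by simp [hPT, Fin.forall_fin_two])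
  have hT₀ : P T 0 0 ≠ 0 := by simp [hPT]
  have h00 : ∀ t ≤ T, P t 0 0 = (A ^ 2 * D ^ 2 / (B ^ 2 + D ^ 2)) ^ (T - t) := fun t ht => by
    simpa [hPT, hr'] using hP.apply_zero_zero ht
  have h01 : ∀ t ≤ T, P t 0 1 = -A ^ (T - t)
      * (D * (Abar * D - ρ * B * Cbar) / (B ^ 2 + D ^ 2)) ^ (T - t) := fun t ht => by
    rw [hP.apply_zero_one hr₀ hT hT₀ ht, hq', mul_assoc A, mul_div_assoc A, mul_pow]
    simp [hPT]
  refine ⟨hq.trans hq', hr.trans hr', fun t ht => ⟨h00 t ht, h01 t ht, ?_, ?_⟩,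
    fun t ht => ⟨?_, ?_⟩⟩
  · rw [(hP.isSymm hT ht).apply 0 1, h01 t ht]
  · simpa [hPT, hr', hq', cross_coeff_sq_div_asset_coeff _ hA hD] using
      hP.apply_one_one hr₀ hT hT₀ ht
  · rw [h00 (t + 1) ht, Nat.sub_sub]
  · have terminal_ratio : P T 0 1 / P T 0 0 = -1 := by simp [hPT]
    refine (hP.gain_eq hr₀ hT hT₀ ht).trans ?_
    rw [hq', hr', cross_coeff_div_asset_coeff _ hA hD hBD, terminal_ratio, Nat.sub_sub,
      mul_comm ((Abar * B + _) / _), mul_neg_one, ← mul_div_assoc]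

/-- Proposition 1 (mean–variance asset-liability specialization, `C = 0`): in the
backward Riccati recursion with `A ≠ 0`, `D ≠ 0`, `B² + D² > 0`, one has
`q = AD(ĀD − ρBC̄)/(B² + D²)`, `r = A²D²/(B² + D²)`, the closed-form entries of `P_t`,
the closed form of `G_t`, and the closed-form optimal feedback vector `(1/G_t)H_t`. -/
theorem stmt_16 (T : ℕ) (A B D Abar Cbar ρ r q : ℝ)
    (hA : A ≠ 0) (hD : D ≠ 0) (hBD : 0 < B ^ 2 + D ^ 2)
    (hr : r = A ^ 2 - (A * B) ^ 2 / (B ^ 2 + D ^ 2))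
    (hq : q = A * Abar - (Abar * B + ρ * Cbar * D) * (A * B) / (B ^ 2 + D ^ 2))
    (P : ℕ → Matrix (Fin 2) (Fin 2) ℝ)
    (hPT : P T = !![1, -1; -1, 1])
    (hrec : ∀ t, t < T →
      P t = !![A ^ 2 * P (t + 1) 0 0, A * Abar * P (t + 1) 0 1;
               A * Abar * P (t + 1) 0 1, (Abar ^ 2 + Cbar ^ 2) * P (t + 1) 1 1]
            - (1 / ((B ^ 2 + D ^ 2) * P (t + 1) 0 0)) •
                vecMulVec
                  ![A * B * P (t + 1) 0 0, (Abar * B + ρ * Cbar * D) * P (t + 1) 1 0]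
                  ![A * B * P (t + 1) 0 0, (Abar * B + ρ * Cbar * D) * P (t + 1) 1 0]) :
    q = A * D * (Abar * D - ρ * B * Cbar) / (B ^ 2 + D ^ 2)
    ∧ r = A ^ 2 * D ^ 2 / (B ^ 2 + D ^ 2)
    ∧ (∀ t, t ≤ T →
        P t 0 0 = (A ^ 2 * D ^ 2 / (B ^ 2 + D ^ 2)) ^ (T - t)
        ∧ P t 0 1 = -A ^ (T - t)
            * (D * (Abar * D - ρ * B * Cbar) / (B ^ 2 + D ^ 2)) ^ (T - t)
        ∧ P t 1 0 = -A ^ (T - t)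
            * (D * (Abar * D - ρ * B * Cbar) / (B ^ 2 + D ^ 2)) ^ (T - t)
        ∧ P t 1 1 = (Abar ^ 2 + Cbar ^ 2) ^ (T - t)
            - ∑ j ∈ Finset.Ico t T,
                ((Abar * D - ρ * B * Cbar) ^ 2 / (B ^ 2 + D ^ 2)) ^ (T - j - 1)
                  * ((Abar * B + ρ * Cbar * D) ^ 2 / (B ^ 2 + D ^ 2))
                  * (Abar ^ 2 + Cbar ^ 2) ^ (j - t))
    ∧ (∀ t, t < T →
        (B ^ 2 + D ^ 2) * P (t + 1) 0 0
            = (B ^ 2 + D ^ 2) * (A ^ 2 * D ^ 2 / (B ^ 2 + D ^ 2)) ^ (T - t - 1)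
        ∧ (1 / ((B ^ 2 + D ^ 2) * P (t + 1) 0 0)) •
              ![A * B * P (t + 1) 0 0, (Abar * B + ρ * Cbar * D) * P (t + 1) 1 0]
            = ![A * B / (B ^ 2 + D ^ 2),
                -((Abar * D - ρ * B * Cbar) / (A * D)) ^ (T - t - 1)
                  * (Abar * B + ρ * Cbar * D) / (B ^ 2 + D ^ 2)]) :=
  stmt_16_general T A B D Abar Cbar ρ r q hA hD hBD.ne' hr hq P hPT hrec
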